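/- Let X be a measurable space, let S and T be probability measures on X (the source and target domains), and let f : X → Bool be a measurable labeling function. Let H be a nonempty set of measurable hypotheses h : X → Bool, and assume the supremum defining d_{HΔH}(S,T) exists (e.g. H is such that the set of values is bounded above; note each value lies in [0,2]). For a domain D ∈ {S,T} and hypothesis h, define the risk R_D(h) = ∫ 1[h(x) ≠ f(x)] dD(x). Define the HΔH-distance d_{HΔH}(S,T) = 2 · sup_{h,h' ∈ H} | ∫ 1[h(x) ≠ h'(x)] dS(x) − ∫ 1[h(x) ≠ h'(x)] dT(x) |, and the ideal joint error λ = inf_{h' ∈ H} ( R_S(h') + R_T(h') ). Then for every h ∈ H: R_T(h) ≤ R_S(h) + (1/2) · d_{HΔH}(S,T) + λ. -/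

import Mathlib

open MeasureTheory

/-- 0-1 disagreement risk of two Boolean-valued functions under a measure `D`:
the integral of the indicator of the set where they differ. -/
noncomputable def disagreeRisk {X : Type*} [MeasurableSpace X]
    (D : Measure X) (g h : X → Bool) : ℝ :=
  ∫ x, (if g x ≠ h x then (1 : ℝ) else 0) ∂D

/-- The HΔH-distance between two measures `S` and `T` with respect to a
hypothesis class `H`. -/
noncomputable def dHDeltaH {X : Type*} [MeasurableSpace X]
    (S T : Measure X) (H : Set (X → Bool)) : ℝ :=
  2 * sSup {r : ℝ | ∃ h ∈ H, ∃ h' ∈ H,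
    r = |disagreeRisk S h h' - disagreeRisk T h h'|}

/-- The ideal joint error `λ`: the infimum over hypotheses in `H` of the sum of
the source and target risks with respect to the labeling function `f`. -/
noncomputable def idealJointError {X : Type*} [MeasurableSpace X]
    (S T : Measure X) (H : Set (X → Bool)) (f : X → Bool) : ℝ :=
  sInf {r : ℝ | ∃ h' ∈ H, r = disagreeRisk S h' f + disagreeRisk T h' f}

theorem integrable_disagree {X : Type*} [MeasurableSpace X] (D : Measure X) [IsFiniteMeasure D]
    {g h : X → Bool} (hg : Measurable g) (hh : Measurable h) :
    Integrable (fun x => if g x ≠ h x then (1 : ℝ) else 0) D := by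
  have hset : MeasurableSet {x | g x ≠ h x} := (measurableSet_eq_fun hg hh).compl
  refine Integrable.of_bound
    (Measurable.ite hset measurable_const measurable_const).aestronglyMeasurable 1 ?_
  filter_upwards with x
  split_ifs <;> simp

theorem disagreeRisk_comm {X : Type*} [MeasurableSpace X] (D : Measure X) (g h : X → Bool) :
    disagreeRisk D g h = disagreeRisk D h g := by
  simp only [disagreeRisk, ne_comm]

theorem disagreeRisk_triangle {X : Type*} [MeasurableSpace X] (D : Measure X) [IsFiniteMeasure D]
    {g h k : X → Bool} (hg : Measurable g) (hh : Measurable h) (hk : Measurable k) :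
    disagreeRisk D g k ≤ disagreeRisk D g h + disagreeRisk D h k := by
  unfold disagreeRisk
  rw [← integral_add (integrable_disagree D hg hh) (integrable_disagree D hh hk)]
  refine integral_mono (integrable_disagree D hg hk)
    ((integrable_disagree D hg hh).add (integrable_disagree D hh hk)) fun x => ?_
  cases g x <;> cases h x <;> cases k x <;> simp

/-- **Ben-David et al. domain adaptation bound.**
For every hypothesis `h ∈ H`, the target risk is bounded by the source risk
plus half the HΔH-distance plus the ideal joint error. -/
theorem ben_david_bound
    {X : Type*} [MeasurableSpace X]
    (S T : Measure X) [IsProbabilityMeasure S] [IsProbabilityMeasure T]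
    (f : X → Bool) (hf : Measurable f)
    (H : Set (X → Bool)) (hH : H.Nonempty)
    (hmeas : ∀ h ∈ H, Measurable h)
    (hbdd : BddAbove {r : ℝ | ∃ h ∈ H, ∃ h' ∈ H,
      r = |disagreeRisk S h h' - disagreeRisk T h h'|}) :
    ∀ h ∈ H,
      disagreeRisk T h f ≤
        disagreeRisk S h f + (1 / 2) * dHDeltaH S T H + idealJointError S T H f := by
  intro h hh
  have hmain : disagreeRisk T h f - disagreeRisk S h f - (1 / 2) * dHDeltaH S T H ≤
      idealJointError S T H f := by
    refine le_csInf (hH.imp' _ fun h' hh' => ⟨h', hh', rfl⟩) ?_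
    rintro _ ⟨h', hh', rfl⟩
    have hsup := le_csSup hbdd ⟨h, hh, h', hh', rfl⟩
    have habs := neg_abs_le (disagreeRisk S h h' - disagreeRisk T h h')
    have hT := disagreeRisk_triangle T (hmeas h hh) (hmeas h' hh') hf
    have hS := disagreeRisk_triangle S (hmeas h hh) hf (hmeas h' hh')
    rw [disagreeRisk_comm S f h'] at hS
    unfold dHDeltaH
    linarith
  linarith
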